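/- Let α ∈ (1,2), γ > 0 and β ∈ [0,1]. Then there exists a constant C > 0, depending only on α, γ and β, such that for all λ > 0 and all t > 0: λ^β |E_{α,γ}(−λ t^α)| ≤ C t^{−αβ}. -/

import Mathlib

/-- The Mittag-Leffler function of real parameters `α, γ > 0` at a real argument:
`E_{α,γ}(x) = Σ_{k=0}^∞ x^k / Γ(αk + γ)`. -/
noncomputable def mittagLeffler (α γ x : ℝ) : ℝ :=
  ∑' k : ℕ, x ^ k / Real.Gamma (α * k + γ)

/-!
Hankel's formula `2πi / Γ(z) = ∫ e^ζ ζ^(-z) dζ` is verified for `0 < Re z < 1`, where the contour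
can be collapsed onto the two sides of the cut and the reflection formula applies, and extends to
all `z` because both sides are entire. On a contour with large `|ζ|` one may sum it against
`(-x)^k` as a geometric series, which gives `2πi E_{α,γ}(-x) = ∫ e^ζ ζ^(α-γ) / (x + ζ^α) dζ`. Since
`α < 2`, the rays of the contour can be given an angle `φ` with `π/2 < φ` and `αφ < π`: the first
keeps `e^ζ` decaying, the second keeps the angle between `x` and `ζ^α` below `π`, so that
`|x + ζ^α| ≥ (1 + x) cos(αφ/2)` for `|ζ| ≥ 1`. Hence `E_{α,γ}(-x) = O(1 / (1 + x))`, and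
`x^β ≤ 1 + x` with `x = λ t^α` gives the weighted bound.
-/

open MeasureTheory Set Filter Topology Asymptotics
open Complex (I)
open scoped Real Complex ComplexConjugate

section RealAsymptotics

lemma tendsto_mul_exp_add_mul_atTop {c : ℝ} (hc : c < 0) (m : ℝ) :
    Tendsto (fun u : ℝ => c * rexp u + m * u) atTop atBot := by
  have hdecay : Tendsto (fun u : ℝ => c + m * (u ^ 1 * rexp (-u))) atTop (𝓝 (c + m * 0)) :=
    ((Real.tendsto_pow_mul_exp_neg_atTop_nhds_zero 1).const_mul m).const_add c
  refine (Real.tendsto_exp_atTop.atTop_mul_neg (by simpa using hc) hdecay).congr fun u => ?_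
  rw [Real.exp_neg]
  field_simp

lemma tendsto_mul_exp_add_mul_atBot (c : ℝ) {m : ℝ} (hm : 0 < m) :
    Tendsto (fun u : ℝ => c * rexp u + m * u) atBot atBot :=
  (Real.tendsto_exp_atBot.const_mul c).add_atBot (tendsto_id.const_mul_atBot hm)

lemma isBigO_exp_mul_exp_add_mul {c : ℝ} (hc : c < 0) (m b : ℝ) :
    (fun u : ℝ => rexp (c * rexp u + m * u + b)) =O[atTop] fun u => rexp (-u) := by
  refine IsBigO.of_bound 1 ?_
  filter_upwards [(tendsto_mul_exp_add_mul_atTop hc (m + 1)).eventually_le_atBot (-b)] with u hu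
  rw [one_mul, Real.norm_of_nonneg (Real.exp_pos _).le, Real.norm_of_nonneg (Real.exp_pos _).le]
  gcongr
  linarith

lemma integrableAtFilter_exp_neg_atTop : IntegrableAtFilter (fun u : ℝ => rexp (-u)) atTop :=
  ⟨Ioi 0, Ioi_mem_atTop 0, integrableOn_exp_neg_Ioi 0⟩

end RealAsymptotics

section ParametricIntegral

lemma differentiable_integral_mul_cexp {X : Type*} [MeasurableSpace X] {μ : Measure X}
    {f w : X → ℂ} (hf : AEStronglyMeasurable f μ) (hw : AEStronglyMeasurable w μ)
    (hfw : ∀ c : ℝ, Integrable (fun x => ‖f x‖ * rexp (c * ‖w x‖)) μ) :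
    Differentiable ℂ fun p : ℂ => ∫ x, f x * cexp (p * w x) ∂μ := by
  have norm_cexp_le (p : ℂ) (x : X) : ‖cexp (p * w x)‖ ≤ rexp (‖p‖ * ‖w x‖) := by
    simpa only [norm_mul] using Complex.norm_exp_le_exp_norm (p * w x)
  have meas (p : ℂ) : AEStronglyMeasurable (fun x => f x * cexp (p * w x)) μ :=
    hf.mul (Complex.continuous_exp.comp_aestronglyMeasurable (hw.const_mul p))
  intro p
  refine (hasDerivAt_integral_of_dominated_loc_of_deriv_le
    (F' := fun q x => f x * cexp (q * w x) * w x)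
    (bound := fun x => ‖f x‖ * rexp ((‖p‖ + 2) * ‖w x‖)) (Metric.ball_mem_nhds p one_pos)
    (.of_forall meas) ?_ ((meas p).mul hw) (.of_forall fun x q hq => ?_) (hfw _)
    (.of_forall fun x q _ => ?_)).2.differentiableAt
  · refine (hfw ‖p‖).mono' (meas p) (.of_forall fun x => ?_)
    rw [norm_mul]
    gcongr
    exact norm_cexp_le p x
  · have hq' : ‖q‖ ≤ ‖p‖ + 1 := by
      linarith [norm_le_norm_add_norm_sub' q p, mem_ball_iff_norm.1 hq]
    calc ‖f x * cexp (q * w x) * w x‖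
        ≤ ‖f x‖ * rexp ((‖p‖ + 1) * ‖w x‖) * rexp ‖w x‖ := by
          rw [norm_mul, norm_mul]
          gcongr
          · exact (norm_cexp_le q x).trans (by gcongr)
          · linarith [Real.add_one_le_exp ‖w x‖]
      _ = ‖f x‖ * rexp ((‖p‖ + 2) * ‖w x‖) := by
          rw [mul_assoc, ← Real.exp_add]
          ring_nf
  · simpa only [mul_assoc, one_mul, id] using
      (((hasDerivAt_id q).mul_const (w x)).cexp).const_mul (f x)

end ParametricIntegral

section ContourShift

lemma integral_boundary_strip_eq_zero {g : ℂ → ℂ} {a b y₁ y₂ : ℝ}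
    (hg : DifferentiableOn ℂ g (uIcc a b ×ℂ uIcc y₁ y₂)) :
    (∫ u in a..b, g (u + y₁ * I)) - (∫ u in a..b, g (u + y₂ * I))
      + I * (∫ y in y₁..y₂, g (b + y * I)) - I * (∫ y in y₁..y₂, g (a + y * I)) = 0 := by
  simpa using Complex.integral_boundary_rect_eq_zero_of_differentiableOn g
    (a + y₁ * I) (b + y₂ * I) (by simpa using hg)

lemma integral_line_eq_of_tendsto_edges {g : ℂ → ℂ} {y₁ y₂ : ℝ} (hg : Differentiable ℂ g)
    (h₁ : Integrable fun u : ℝ => g (u + y₁ * I)) (h₂ : Integrable fun u : ℝ => g (u + y₂ * I))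
    (hbot : Tendsto (fun a : ℝ => ∫ y in y₁..y₂, g (a + y * I)) atBot (𝓝 0))
    (htop : Tendsto (fun b : ℝ => ∫ y in y₁..y₂, g (b + y * I)) atTop (𝓝 0)) :
    ∫ u : ℝ, g (u + y₁ * I) = ∫ u : ℝ, g (u + y₂ * I) := by
  have hlim := (((intervalIntegral_tendsto_integral h₁ tendsto_neg_atTop_atBot tendsto_id).sub
    (intervalIntegral_tendsto_integral h₂ tendsto_neg_atTop_atBot tendsto_id)).add
    (htop.const_mul I)).sub ((hbot.comp tendsto_neg_atTop_atBot).const_mul I)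
  have hzero := tendsto_nhds_unique hlim (tendsto_const_nhds.congr fun R =>
    (integral_boundary_strip_eq_zero hg.differentiableOn (a := -R) (b := R)).symm)
  simpa [sub_eq_zero] using hzero

end ContourShift

section HankelContour

/-- The Hankel contour in the logarithmic coordinate `w = log ζ`: it comes in from `+∞` along
`Im w = -φ`, climbs the segment `Re w = a`, `|Im w| ≤ φ`, and leaves along `Im w = φ`. -/
noncomputable def hankelContour (φ a s : ℝ) : ℂ :=
  (a + max (|s| - φ) 0 : ℝ) + (max (-φ) (min s φ) : ℝ) * I

/-- The unit tangent of `hankelContour φ a` at the parameter `s`, away from its two corners. -/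
noncomputable def hankelTangent (φ s : ℝ) : ℂ :=
  if s ≤ -φ then -1 else if s ≤ φ then I else 1

/-- The integral of `g` along `hankelContour φ a`. -/
noncomputable def hankelIntegral (φ a : ℝ) (g : ℂ → ℂ) : ℂ :=
  ∫ s : ℝ, hankelTangent φ s * g (hankelContour φ a s)

variable {φ a b s : ℝ} {g : ℂ → ℂ}

lemma le_re_hankelContour : a ≤ (hankelContour φ a s).re := by
  simp [hankelContour]

lemma abs_im_hankelContour_le (hφ : 0 ≤ φ) : |(hankelContour φ a s).im| ≤ φ := by
  simp [hankelContour, abs_le, hφ]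

lemma continuous_hankelContour : Continuous (hankelContour φ a) := by
  unfold hankelContour
  fun_prop

lemma hankelContour_neg (hφ : 0 ≤ φ) :
    hankelContour φ a (-s) = conj (hankelContour φ a s) := by
  have hclamp : max (-φ) (min (-s) φ) = -max (-φ) (min s φ) := by grind
  simp [hankelContour, hclamp]

lemma hankelContour_of_le (hφ : 0 ≤ φ) (hs : φ ≤ s) :
    hankelContour φ a s = (s + (a - φ) : ℝ) + φ * I := by
  have hs₀ : |s| = s := abs_of_nonneg (hφ.trans hs)
  have hclamp : max (-φ) (min s φ) = φ := by grind
  rw [hankelContour, hs₀, hclamp, max_eq_left (by linarith), add_sub_left_comm]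

lemma hankelContour_of_abs_le (hs : |s| ≤ φ) : hankelContour φ a s = a + s * I := by
  have hclamp : max (-φ) (min s φ) = s := by grind [abs_le.1 hs]
  rw [hankelContour, hclamp, max_eq_right (by linarith), add_zero]

lemma norm_hankelTangent : ‖hankelTangent φ s‖ = 1 := by
  unfold hankelTangent
  split_ifs <;> simp

lemma measurable_hankelTangent : Measurable (hankelTangent φ) :=
  Measurable.ite measurableSet_Iic measurable_const
    (Measurable.ite measurableSet_Iic measurable_const measurable_const)

lemma integrable_hankelTangent_mul (hg : Integrable fun s => g (hankelContour φ a s)) :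
    Integrable fun s => hankelTangent φ s * g (hankelContour φ a s) :=
  hg.bdd_mul measurable_hankelTangent.aestronglyMeasurable
    (.of_forall fun _ => norm_hankelTangent.le)

lemma integrableOn_upperRay (hφ : 0 ≤ φ) (hg : Integrable fun s => g (hankelContour φ a s)) :
    IntegrableOn (fun u : ℝ => g (u + φ * I)) (Ioi a) := by
  rw [← (measurePreserving_add_right volume (a - φ)).integrableOn_comp_preimage
    (measurableEmbedding_addRight _), preimage_add_const_Ioi, sub_sub_cancel]
  refine hg.integrableOn.congr_fun (fun s hs => ?_) measurableSet_Ioi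
  simp only [Function.comp_apply, hankelContour_of_le hφ (le_of_lt hs)]

lemma setIntegral_upperRay (hφ : 0 ≤ φ) :
    ∫ s in Ioi φ, g (hankelContour φ a s) = ∫ u : ℝ in Ioi a, g (u + φ * I) := by
  rw [← (measurePreserving_add_right volume (a - φ)).setIntegral_preimage_emb
    (measurableEmbedding_addRight _) (fun u : ℝ => g (u + φ * I)) (Ioi a),
    preimage_add_const_Ioi, sub_sub_cancel]
  refine setIntegral_congr_fun measurableSet_Ioi fun s hs => ?_
  simp only [hankelContour_of_le hφ (le_of_lt hs)]

lemma conj_upperRay (u : ℝ) : conj ((u : ℂ) + φ * I) = u + (-φ : ℝ) * I := by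
  simp

lemma integrableOn_lowerRay (hφ : 0 ≤ φ) (hg : Integrable fun s => g (hankelContour φ a s)) :
    IntegrableOn (fun u : ℝ => g (u + (-φ : ℝ) * I)) (Ioi a) := by
  simpa only [conj_upperRay] using integrableOn_upperRay (g := fun w => g (conj w)) hφ
    (by simpa only [hankelContour_neg hφ] using hg.comp_neg)

lemma setIntegral_lowerRay (hφ : 0 ≤ φ) :
    ∫ s in Iic (-φ), g (hankelContour φ a s) = ∫ u : ℝ in Ioi a, g (u + (-φ : ℝ) * I) := by
  rw [← integral_comp_neg_Ioi]
  simpa only [conj_upperRay, hankelContour_neg hφ] using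
    setIntegral_upperRay (g := fun w => g (conj w)) hφ

lemma hankelIntegral_eq (hφ : 0 ≤ φ) (hg : Integrable fun s => g (hankelContour φ a s)) :
    hankelIntegral φ a g = (∫ u : ℝ in Ioi a, g (u + φ * I))
      - (∫ u : ℝ in Ioi a, g (u + (-φ : ℝ) * I)) + I * ∫ y in (-φ)..φ, g (a + y * I) := by
  have hτg := integrable_hankelTangent_mul hg
  have lower : ∫ s in Iic (-φ), hankelTangent φ s * g (hankelContour φ a s)
      = -∫ u : ℝ in Ioi a, g (u + (-φ : ℝ) * I) := by
    rw [← setIntegral_lowerRay hφ, ← integral_neg]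
    refine setIntegral_congr_fun measurableSet_Iic fun s hs => ?_
    simp only [hankelTangent, if_pos (mem_Iic.1 hs), neg_one_mul]
  have segment : ∫ s in (-φ)..φ, hankelTangent φ s * g (hankelContour φ a s)
      = I * ∫ y in (-φ)..φ, g (a + y * I) := by
    rw [← intervalIntegral.integral_const_mul]
    refine intervalIntegral.integral_congr_ae (.of_forall fun s hs => ?_)
    rw [uIoc_of_le (by linarith)] at hs
    rw [hankelTangent, if_neg hs.1.not_ge, if_pos hs.2,
      hankelContour_of_abs_le (abs_le.2 ⟨hs.1.le, hs.2⟩)]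
  have upper : ∫ s in Ioi φ, hankelTangent φ s * g (hankelContour φ a s)
      = ∫ u : ℝ in Ioi a, g (u + φ * I) := by
    rw [← setIntegral_upperRay hφ]
    refine setIntegral_congr_fun measurableSet_Ioi fun s hs => ?_
    have hs' : φ < s := hs
    simp only [hankelTangent, if_neg (show ¬s ≤ -φ by linarith), if_neg hs'.not_ge, one_mul]
  rw [hankelIntegral, ← intervalIntegral.integral_Iic_add_Ioi (b := -φ) hτg.integrableOn
    hτg.integrableOn, ← intervalIntegral.integral_interval_add_Ioi (b := φ) hτg.integrableOn
    hτg.integrableOn, lower, segment, upper]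
  ring

lemma hankelIntegral_shift (hφ : 0 ≤ φ)
    (hg : DifferentiableOn ℂ g (uIcc a b ×ℂ Icc (-φ) φ))
    (ha : Integrable fun s => g (hankelContour φ a s))
    (hb : Integrable fun s => g (hankelContour φ b s)) :
    hankelIntegral φ a g = hankelIntegral φ b g := by
  rw [← uIcc_of_le (by linarith)] at hg
  have upper := intervalIntegral.integral_interval_add_Ioi
    (integrableOn_upperRay hφ ha) (integrableOn_upperRay hφ hb)
  have lower := intervalIntegral.integral_interval_add_Ioi
    (integrableOn_lowerRay hφ ha) (integrableOn_lowerRay hφ hb)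
  rw [hankelIntegral_eq hφ ha, hankelIntegral_eq hφ hb, ← upper, ← lower]
  linear_combination -integral_boundary_strip_eq_zero hg

lemma norm_hankelIntegral_le {F : ℝ → ℝ} (hF : Integrable F)
    (hg : ∀ s, ‖g (hankelContour φ a s)‖ ≤ F s) : ‖hankelIntegral φ a g‖ ≤ ∫ s, F s := by
  refine norm_integral_le_of_norm_le hF (.of_forall fun s => ?_)
  rw [norm_mul, norm_hankelTangent, one_mul]
  exact hg s

lemma hasSum_hankelIntegral {f : ℕ → ℂ → ℂ} {r : ℕ → ℝ} {F : ℝ → ℝ}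
    (hf : ∀ k, Measurable (f k)) (hr : Summable r) (hF : Integrable F)
    (hfF : ∀ k s, ‖f k (hankelContour φ a s)‖ ≤ F s * r k)
    (hfg : ∀ s, HasSum (fun k => f k (hankelContour φ a s)) (g (hankelContour φ a s))) :
    HasSum (fun k => hankelIntegral φ a (f k)) (hankelIntegral φ a g) := by
  refine hasSum_integral_of_dominated_convergence (fun k s => F s * r k) (fun k => ?_)
    (fun k => .of_forall fun s => ?_) (.of_forall fun s => hr.mul_left _) ?_
    (.of_forall fun s => (hfg s).mul_left _)
  · exact (measurable_hankelTangent.mul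
      ((hf k).comp continuous_hankelContour.measurable)).aestronglyMeasurable
  · rw [norm_mul, norm_hankelTangent, one_mul]
    exact hfF k s
  · simpa only [tsum_mul_left] using hF.mul_const _

lemma exp_re_hankelContour_of_le (hφ : 0 ≤ φ) (hs : φ ≤ s) :
    (cexp (hankelContour φ a s)).re = rexp (a - φ) * Real.cos φ * rexp s := by
  rw [hankelContour_of_le hφ hs, Complex.exp_re]
  simp only [Complex.ofReal_add, Complex.ofReal_sub, Complex.add_re, Complex.ofReal_re,
    Complex.sub_re, Complex.mul_re, Complex.I_re, mul_zero, Complex.ofReal_im, Complex.I_im,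
    mul_one, sub_self, add_zero, Real.exp_add, Complex.add_im, Complex.sub_im, Complex.mul_im,
    zero_add]
  ring

lemma norm_hankelContour_le_of_le (hφ : 0 ≤ φ) (hs : φ ≤ s) :
    ‖hankelContour φ a s‖ ≤ s + (|a| + 2 * φ) := by
  rw [hankelContour_of_le hφ hs]
  refine (norm_add_le _ _).trans ?_
  rw [norm_mul, Complex.norm_I, Complex.norm_real, Complex.norm_real, Real.norm_eq_abs,
    Real.norm_of_nonneg hφ, mul_one]
  grind

lemma integrable_exp_hankelContour (hφ : 0 ≤ φ) (hcos : Real.cos φ < 0) (c : ℝ) :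
    Integrable fun s =>
      rexp ((cexp (hankelContour φ a s)).re + c * ‖hankelContour φ a s‖) := by
  have hcont : Continuous fun s =>
      rexp ((cexp (hankelContour φ a s)).re + c * ‖hankelContour φ a s‖) := by
    have := continuous_hankelContour (φ := φ) (a := a)
    fun_prop
  refine hcont.locallyIntegrable.integrable_of_isBigO_atTop_of_norm_isNegInvariant
    (.of_forall fun s => ?_) (.trans (.of_bound 1 ?_) (isBigO_exp_mul_exp_add_mul
      (mul_neg_of_pos_of_neg (Real.exp_pos (a - φ)) hcos) |c| (|c| * (|a| + 2 * φ))))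
    integrableAtFilter_exp_neg_atTop
  · simp only [Function.comp_apply, hankelContour_neg hφ, Complex.exp_conj, Complex.conj_re,
      RCLike.norm_conj]
  · filter_upwards [eventually_ge_atTop φ] with s hs
    rw [one_mul, Real.norm_of_nonneg (Real.exp_pos _).le, Real.norm_of_nonneg (Real.exp_pos _).le,
      exp_re_hankelContour_of_le hφ hs]
    have hlin : c * ‖hankelContour φ a s‖ ≤ |c| * (s + (|a| + 2 * φ)) := by
      gcongr
      exacts [le_abs_self c, norm_hankelContour_le_of_le hφ hs]
    refine Real.exp_le_exp.2 ?_
    linarith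

end HankelContour

section Gamma

/-- Hankel's integrand `e^ζ ζ^(p-1) dζ` in the coordinate `ζ = e^w`. -/
noncomputable def hankelIntegrand (p w : ℂ) : ℂ :=
  cexp (cexp w + p * w)

variable {φ a y y₁ y₂ : ℝ} {p : ℂ}

lemma differentiable_hankelIntegrand (p : ℂ) : Differentiable ℂ (hankelIntegrand p) := by
  unfold hankelIntegrand
  fun_prop

lemma continuous_hankelIntegrand (p : ℂ) : Continuous (hankelIntegrand p) :=
  (differentiable_hankelIntegrand p).continuous

lemma norm_hankelIntegrand (p w : ℂ) :
    ‖hankelIntegrand p w‖ = rexp ((cexp w).re + (p * w).re) := by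
  rw [hankelIntegrand, Complex.norm_exp, Complex.add_re]

lemma norm_hankelIntegrand_add_mul_I (p : ℂ) (u y : ℝ) :
    ‖hankelIntegrand p (u + y * I)‖
      = rexp (Real.cos y * rexp u + p.re * u + -(p.im * y)) := by
  rw [norm_hankelIntegrand, Complex.exp_re]
  simp only [Complex.add_re, Complex.ofReal_re, Complex.mul_re, Complex.I_re, mul_zero,
    Complex.ofReal_im, Complex.I_im, mul_one, sub_self, add_zero, Complex.add_im, Complex.mul_im,
    zero_add]
  ring_nf

lemma integrable_hankelIntegrand_hankelContour (hφ : 0 ≤ φ) (hcos : Real.cos φ < 0) :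
    Integrable fun s => hankelIntegrand p (hankelContour φ a s) := by
  refine (integrable_exp_hankelContour (a := a) hφ hcos ‖p‖).mono'
    ((continuous_hankelIntegrand p).comp continuous_hankelContour).aestronglyMeasurable
    (.of_forall fun s => ?_)
  rw [norm_hankelIntegrand, ← norm_mul]
  gcongr
  exact Complex.re_le_norm _

lemma differentiable_hankelIntegral_hankelIntegrand (hφ : 0 ≤ φ) (hcos : Real.cos φ < 0) :
    Differentiable ℂ fun p => hankelIntegral φ a (hankelIntegrand p) := by
  have hw : Continuous (hankelContour φ a) := continuous_hankelContour
  have hf : Measurable fun s => hankelTangent φ s * cexp (cexp (hankelContour φ a s)) :=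
    measurable_hankelTangent.mul (by fun_prop)
  simpa only [hankelIntegral, hankelIntegrand, Complex.exp_add, mul_assoc] using
    differentiable_integral_mul_cexp hf.aestronglyMeasurable hw.aestronglyMeasurable fun c => by
      simpa only [norm_mul, norm_hankelTangent, one_mul, Complex.norm_exp, ← Real.exp_add] using
        integrable_exp_hankelContour hφ hcos c

lemma tendsto_integral_edge_hankelIntegrand {l : Filter ℝ} {c : ℝ}
    (hc : ∀ y ∈ uIcc y₁ y₂, Real.cos y ≤ c)
    (hl : Tendsto (fun u : ℝ => c * rexp u + p.re * u) l atBot) :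
    Tendsto (fun u : ℝ => ∫ y in y₁..y₂, hankelIntegrand p (u + y * I)) l (𝓝 0) := by
  set M := |p.im| * max |y₁| |y₂|
  have hbound (u : ℝ) : ‖∫ y in y₁..y₂, hankelIntegrand p (u + y * I)‖
      ≤ rexp (c * rexp u + p.re * u) * rexp M * |y₂ - y₁| := by
    refine intervalIntegral.norm_integral_le_of_norm_le_const fun y hy => ?_
    have hy_max : |y| ≤ max |y₁| |y₂| := by grind [mem_uIoc]
    have hM : -(p.im * y) ≤ M := calc
      -(p.im * y) ≤ |p.im| * |y| := (neg_le_abs _).trans_eq (abs_mul _ _)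
      _ ≤ M := mul_le_mul_of_nonneg_left hy_max (abs_nonneg _)
    rw [norm_hankelIntegrand_add_mul_I, ← Real.exp_add]
    gcongr
    exact hc y (uIoc_subset_uIcc hy)
  refine squeeze_zero_norm hbound ?_
  simpa using ((Real.tendsto_exp_atBot.comp hl).mul_const (rexp M)).mul_const |y₂ - y₁|

lemma tendsto_integral_edge_hankelIntegrand_atBot (hp : 0 < p.re) :
    Tendsto (fun u : ℝ => ∫ y in y₁..y₂, hankelIntegrand p (u + y * I)) atBot (𝓝 0) :=
  tendsto_integral_edge_hankelIntegrand (fun y _ => Real.cos_le_one y)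
    (tendsto_mul_exp_add_mul_atBot 1 hp)

lemma integrable_hankelIntegrand_line (hy : Real.cos y < 0) (hp : 0 < p.re) :
    Integrable fun u : ℝ => hankelIntegrand p (u + y * I) := by
  have hcont : Continuous fun u : ℝ => hankelIntegrand p (u + y * I) :=
    (continuous_hankelIntegrand p).comp (by fun_prop)
  have hbot : IntegrableAtFilter (fun u : ℝ => rexp (p.re * u)) atBot :=
    ⟨Iic 0, Iic_mem_atBot 0, integrableOn_exp_mul_Iic hp 0⟩
  refine hcont.locallyIntegrable.integrable_of_isBigO_atBot_atTop
    (.of_bound (rexp (-(p.im * y))) (.of_forall fun u => ?_)) hbot ?_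
    integrableAtFilter_exp_neg_atTop
  · rw [norm_hankelIntegrand_add_mul_I, Real.norm_of_nonneg (Real.exp_pos _).le, ← Real.exp_add]
    refine Real.exp_le_exp.2 ?_
    linarith [mul_neg_of_neg_of_pos hy (Real.exp_pos u)]
  · refine IsBigO.of_norm_left ?_
    simp_rw [norm_hankelIntegrand_add_mul_I]
    exact isBigO_exp_mul_exp_add_mul hy p.re _

lemma integral_cexp_neg_exp_add_mul (hp : 0 < p.re) :
    ∫ u : ℝ, cexp (-rexp u + p * u) = Complex.Gamma p := by
  have hsubst := integral_image_eq_integral_abs_deriv_smul MeasurableSet.univ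
    (fun u _ => (Real.hasDerivAt_exp u).hasDerivWithinAt) Real.exp_injective.injOn
    (fun x : ℝ => ((rexp (-x) : ℝ) : ℂ) * (x : ℂ) ^ (p - 1))
  rw [image_univ, Real.range_exp, setIntegral_univ] at hsubst
  rw [Complex.Gamma_eq_integral hp, Complex.GammaIntegral, hsubst]
  refine integral_congr_ae (.of_forall fun u => ?_)
  have hu : (rexp u : ℂ) ≠ 0 := by exact_mod_cast (Real.exp_pos u).ne'
  simp only [abs_of_pos (Real.exp_pos u), Complex.real_smul, Complex.cpow_def_of_ne_zero hu,
    ← Complex.ofReal_log (Real.exp_pos u).le, Real.log_exp]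
  push_cast
  rw [← Complex.exp_add, ← Complex.exp_add]
  ring_nf

lemma integral_hankelIntegrand_line_of_exp_eq_neg_one (hy : cexp (y * I) = -1) (hp : 0 < p.re) :
    ∫ u : ℝ, hankelIntegrand p (u + y * I) = cexp (p * (y * I)) * Complex.Gamma p := by
  rw [← integral_cexp_neg_exp_add_mul hp, ← integral_const_mul]
  refine integral_congr_ae (.of_forall fun u => ?_)
  simp only [hankelIntegrand, Complex.exp_add (u : ℂ), hy, ← Complex.exp_add (p * _)]
  push_cast
  ring_nf

lemma integral_hankelIntegrand_line_eq (hy : ∀ y ∈ uIcc y₁ y₂, Real.cos y < 0) (hp : 0 < p.re) :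
    ∫ u : ℝ, hankelIntegrand p (u + y₁ * I) = ∫ u : ℝ, hankelIntegrand p (u + y₂ * I) := by
  obtain ⟨y₀, hy₀, hmax⟩ :=
    isCompact_uIcc.exists_isMaxOn nonempty_uIcc Real.continuous_cos.continuousOn
  exact integral_line_eq_of_tendsto_edges (differentiable_hankelIntegrand p)
    (integrable_hankelIntegrand_line (hy _ left_mem_uIcc) hp)
    (integrable_hankelIntegrand_line (hy _ right_mem_uIcc) hp)
    (tendsto_integral_edge_hankelIntegrand_atBot hp)
    (tendsto_integral_edge_hankelIntegrand hmax (tendsto_mul_exp_add_mul_atTop (hy y₀ hy₀) p.re))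

lemma cos_neg_of_mem_Ioc (hy : y ∈ Ioc (π / 2) π) : Real.cos y < 0 :=
  Real.cos_neg_of_pi_div_two_lt_of_lt hy.1 (by linarith [hy.2, Real.pi_pos])

lemma integral_hankelIntegrand_upperLine (hφ : φ ∈ Ioc (π / 2) π) (hp : 0 < p.re) :
    ∫ u : ℝ, hankelIntegrand p (u + φ * I) = cexp (p * (π * I)) * Complex.Gamma p := by
  rw [← integral_hankelIntegrand_line_of_exp_eq_neg_one Complex.exp_pi_mul_I hp]
  refine integral_hankelIntegrand_line_eq (fun y hy => ?_) hp
  rw [uIcc_of_le hφ.2] at hy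
  exact cos_neg_of_mem_Ioc ⟨hφ.1.trans_le hy.1, hy.2⟩

lemma integral_hankelIntegrand_lowerLine (hφ : φ ∈ Ioc (π / 2) π) (hp : 0 < p.re) :
    ∫ u : ℝ, hankelIntegrand p (u + (-φ : ℝ) * I) = cexp (-(p * (π * I))) * Complex.Gamma p := by
  have hexp : cexp ((-π : ℝ) * I) = -1 := by simp
  rw [show -(p * (π * I)) = p * ((-π : ℝ) * I) by push_cast; ring,
    ← integral_hankelIntegrand_line_of_exp_eq_neg_one hexp hp]
  refine integral_hankelIntegrand_line_eq (fun y hy => ?_) hp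
  rw [uIcc_of_ge (neg_le_neg hφ.2)] at hy
  rw [← Real.cos_neg]
  exact cos_neg_of_mem_Ioc ⟨by linarith [hφ.1, hy.2], by linarith [hy.1]⟩

lemma hankelIntegral_hankelIntegrand_of_re_pos (hφ : φ ∈ Ioc (π / 2) π) (hp : 0 < p.re) :
    hankelIntegral φ a (hankelIntegrand p)
      = 2 * I * Complex.sin (π * p) * Complex.Gamma p := by
  have hφ₀ : 0 ≤ φ := Real.pi_div_two_pos.le.trans hφ.1.le
  have hcos := cos_neg_of_mem_Ioc hφ
  have hint (b : ℝ) := integrable_hankelIntegrand_hankelContour (p := p) (a := b) hφ₀ hcos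
  have tendsto_ray {y : ℝ} (hy : Real.cos y < 0) :=
    (aecover_Ioi tendsto_id).integral_tendsto_of_countably_generated
      (integrable_hankelIntegrand_line hy hp)
  have hlim := ((tendsto_ray hcos).sub (tendsto_ray ((Real.cos_neg φ).trans_lt hcos))).add
    ((tendsto_integral_edge_hankelIntegrand_atBot (y₁ := -φ) (y₂ := φ) hp).const_mul I)
  have hconst (b : ℝ) := (hankelIntegral_shift hφ₀
    (differentiable_hankelIntegrand p).differentiableOn (hint a) (hint b)).trans
    (hankelIntegral_eq hφ₀ (hint b))
  rw [tendsto_nhds_unique (tendsto_const_nhds.congr hconst) hlim,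
    integral_hankelIntegrand_upperLine hφ hp, integral_hankelIntegrand_lowerLine hφ hp,
    Complex.sin, neg_mul (_ * p), mul_comm (π : ℂ) p, mul_assoc p]
  linear_combination
    (cexp (p * (π * I)) - cexp (-(p * (π * I)))) * Complex.Gamma p * Complex.I_sq

-- At a pole of `Γ` Mathlib sets `Γ z = 0`, so `(Γ z)⁻¹ = 0` is the value of the entire function
-- `1/Γ` there.
theorem hankelIntegral_hankelIntegrand_one_sub (hφ : φ ∈ Ioc (π / 2) π) (z : ℂ) :
    hankelIntegral φ a (hankelIntegrand (1 - z)) = 2 * π * I * (Complex.Gamma z)⁻¹ := by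
  have hφ₀ : 0 ≤ φ := Real.pi_div_two_pos.le.trans hφ.1.le
  have hleft : Differentiable ℂ fun z => hankelIntegral φ a (hankelIntegrand (1 - z)) :=
    (differentiable_hankelIntegral_hankelIntegrand hφ₀ (cos_neg_of_mem_Ioc hφ)).comp
      (differentiable_id.const_sub 1)
  have hright : Differentiable ℂ fun z => 2 * π * I * (Complex.Gamma z)⁻¹ :=
    Complex.differentiable_one_div_Gamma.const_mul _
  have hstrip : {z : ℂ | 0 < z.re ∧ z.re < 1} ∈ 𝓝 (1 / 2 : ℂ) :=
    ((isOpen_lt continuous_const Complex.continuous_re).inter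
      (isOpen_lt Complex.continuous_re continuous_const)).mem_nhds (by norm_num)
  refine congrFun (AnalyticOnNhd.eq_of_eventuallyEq (z₀ := 1 / 2)
    (hleft.differentiableOn.analyticOnNhd isOpen_univ)
    (hright.differentiableOn.analyticOnNhd isOpen_univ) ?_) z
  filter_upwards [hstrip] with z ⟨hz₀, hz₁⟩
  have hz₁' : 0 < (1 - z).re := by simpa using hz₁
  have hΓ := Complex.Gamma_ne_zero_of_re_pos hz₀
  have hreflection := Complex.Gamma_mul_Gamma_one_sub z
  have hsin : Complex.sin (π * z) ≠ 0 := by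
    intro h
    rw [h, div_zero] at hreflection
    exact mul_ne_zero hΓ (Complex.Gamma_ne_zero_of_re_pos hz₁') hreflection
  rw [hankelIntegral_hankelIntegrand_of_re_pos hφ hz₁', mul_sub, mul_one, Complex.sin_pi_sub]
  rw [eq_div_iff hsin] at hreflection
  field_simp
  linear_combination hreflection

end Gamma

section MittagLefflerKernel

lemma add_exp_re_mul_cos_le_norm (x : ℝ) (w : ℂ) :
    (x + rexp w.re) * Real.cos (w.im / 2) ≤ ‖(x : ℂ) + cexp w‖ := by
  -- Halving the angle between `x` and `cexp w` makes both summands contribute their cosine.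
  have hrot : cexp w * cexp ((-(w.im / 2) : ℝ) * I) = rexp w.re * cexp ((w.im / 2 : ℝ) * I) := by
    rw [Complex.ofReal_exp, ← Complex.exp_add, ← Complex.exp_add]
    nth_rw 1 [← Complex.re_add_im w]
    push_cast
    ring_nf
  calc (x + rexp w.re) * Real.cos (w.im / 2)
      = (((x : ℂ) + cexp w) * cexp ((-(w.im / 2) : ℝ) * I)).re := by
        rw [add_mul, add_mul, hrot, Complex.add_re, Complex.re_ofReal_mul, Complex.re_ofReal_mul,
          Complex.exp_ofReal_mul_I_re, Complex.exp_ofReal_mul_I_re, Real.cos_neg]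
    _ ≤ ‖((x : ℂ) + cexp w) * cexp ((-(w.im / 2) : ℝ) * I)‖ := Complex.re_le_norm _
    _ = ‖(x : ℂ) + cexp w‖ := by rw [norm_mul, Complex.norm_exp_ofReal_mul_I, mul_one]

variable {α φ x : ℝ} {γ w : ℂ}

lemma cos_mul_div_two_pos (hα : 0 ≤ α) (hφ : 0 ≤ φ) (hαφ : α * φ < π) :
    0 < Real.cos (α * φ / 2) :=
  Real.cos_pos_of_mem_Ioo ⟨by linarith [mul_nonneg hα hφ, Real.pi_pos], by linarith⟩

lemma add_exp_mul_cos_le_norm (hα : 0 ≤ α) (hαφ : α * φ < π) (hx : 0 ≤ x) (hw : |w.im| ≤ φ) :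
    (x + rexp (α * w.re)) * Real.cos (α * φ / 2) ≤ ‖(x : ℂ) + cexp (α * w)‖ := by
  have hcos : Real.cos (α * φ / 2) ≤ Real.cos (α * w.im / 2) := by
    rw [← Real.cos_abs (α * w.im / 2), abs_div, abs_mul, abs_two, abs_of_nonneg hα]
    refine Real.cos_le_cos_of_nonneg_of_le_pi (by positivity) (by linarith [Real.pi_pos]) ?_
    gcongr
  calc (x + rexp (α * w.re)) * Real.cos (α * φ / 2)
      ≤ (x + rexp (α * w.re)) * Real.cos (α * w.im / 2) := by gcongr
    _ ≤ ‖(x : ℂ) + cexp (α * w)‖ := by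
        simpa only [Complex.re_ofReal_mul, Complex.im_ofReal_mul] using
          add_exp_re_mul_cos_le_norm x (α * w)

/-- The integrand `e^ζ ζ^(α-γ) / (x + ζ^α) dζ` of the Hankel representation of
`2πi E_{α,γ}(-x)`, in the coordinate `ζ = e^w`. -/
noncomputable def mittagLefflerKernel (α : ℝ) (γ : ℂ) (x : ℝ) (w : ℂ) : ℂ :=
  hankelIntegrand (1 - γ + α) w / (x + cexp (α * w))

lemma measurable_mittagLefflerKernel : Measurable (mittagLefflerKernel α γ x) :=
  (continuous_hankelIntegrand _).measurable.div (by fun_prop)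

lemma differentiableAt_mittagLefflerKernel (hα : 0 ≤ α) (hαφ : α * φ < π) (hx : 0 ≤ x)
    (hw : |w.im| ≤ φ) : DifferentiableAt ℂ (mittagLefflerKernel α γ x) w := by
  have hcos := cos_mul_div_two_pos hα ((abs_nonneg _).trans hw) hαφ
  have hne : (x : ℂ) + cexp (α * w) ≠ 0 :=
    norm_pos_iff.1 ((mul_pos (by positivity) hcos).trans_le (add_exp_mul_cos_le_norm hα hαφ hx hw))
  exact (differentiable_hankelIntegrand _ w).div (by fun_prop) hne

lemma norm_mittagLefflerKernel_le (hα : 0 ≤ α) (hαφ : α * φ < π) (hx : 0 ≤ x)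
    (hre : 0 ≤ w.re) (him : |w.im| ≤ φ) :
    ‖mittagLefflerKernel α γ x w‖
      ≤ ‖hankelIntegrand (1 - γ + α) w‖ / ((1 + x) * Real.cos (α * φ / 2)) := by
  have hcos := cos_mul_div_two_pos hα ((abs_nonneg _).trans him) hαφ
  rw [mittagLefflerKernel, norm_div]
  gcongr
  refine le_trans ?_ (add_exp_mul_cos_le_norm hα hαφ hx him)
  rw [add_comm 1 x]
  gcongr
  exact Real.one_le_exp (mul_nonneg hα hre)

lemma hankelIntegrand_add (p q w : ℂ) :
    hankelIntegrand (p + q) w = hankelIntegrand p w * cexp (q * w) := by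
  rw [hankelIntegrand, hankelIntegrand, ← Complex.exp_add, add_mul, add_assoc]

lemma hankelIntegrand_one_sub_mul_add (k : ℕ) :
    hankelIntegrand (1 - (α * k + γ)) w = hankelIntegrand (1 - γ) w * cexp (-(α * w)) ^ k := by
  rw [← Complex.exp_nat_mul, show 1 - (α * k + γ) = 1 - γ + k * -α by ring, hankelIntegrand_add,
    mul_assoc, neg_mul]

lemma mittagLefflerKernel_eq_mul_inv :
    mittagLefflerKernel α γ x w
      = hankelIntegrand (1 - γ) w * (1 + x * cexp (-(α * w)))⁻¹ := by
  have hfactor : (x : ℂ) + cexp (α * w) = (1 + x * cexp (-(α * w))) * cexp (α * w) := by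
    rw [Complex.exp_neg]
    field_simp
    ring
  rw [mittagLefflerKernel, hankelIntegrand_add, hfactor,
    mul_div_mul_right _ _ (Complex.exp_ne_zero _), div_eq_mul_inv]

lemma hasSum_mittagLefflerKernel (hw : ‖x * cexp (-(α * w))‖ < 1) :
    HasSum (fun k : ℕ => (-x : ℂ) ^ k * hankelIntegrand (1 - (α * k + γ)) w)
      (mittagLefflerKernel α γ x w) := by
  rw [← norm_neg] at hw
  rw [mittagLefflerKernel_eq_mul_inv, ← sub_neg_eq_add]
  simp only [hankelIntegrand_one_sub_mul_add, mul_left_comm _ (hankelIntegrand _ _), ← mul_pow,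
    neg_mul]
  exact (hasSum_geometric_of_norm_lt_one hw).mul_left _

end MittagLefflerKernel

section Representation

variable {α φ a x : ℝ} {γ : ℂ}

lemma integrable_mittagLefflerKernel (hφ : φ ∈ Ioc (π / 2) π) (hα : 0 ≤ α) (hαφ : α * φ < π)
    (hx : 0 ≤ x) (ha : 0 ≤ a) :
    Integrable fun s => mittagLefflerKernel α γ x (hankelContour φ a s) := by
  have hφ₀ : 0 ≤ φ := Real.pi_div_two_pos.le.trans hφ.1.le
  have hint : Integrable fun s => hankelIntegrand (1 - γ + α) (hankelContour φ a s) :=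
    integrable_hankelIntegrand_hankelContour hφ₀ (cos_neg_of_mem_Ioc hφ)
  exact (hint.norm.div_const ((1 + x) * Real.cos (α * φ / 2))).mono'
    (measurable_mittagLefflerKernel.comp continuous_hankelContour.measurable).aestronglyMeasurable
    (.of_forall fun s => norm_mittagLefflerKernel_le hα hαφ hx (ha.trans le_re_hankelContour)
      (abs_im_hankelContour_le hφ₀))

lemma hankelIntegral_const_mul (c : ℂ) (g : ℂ → ℂ) :
    hankelIntegral φ a (fun w => c * g w) = c * hankelIntegral φ a g := by
  simp only [hankelIntegral, mul_left_comm _ c, integral_const_mul]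

lemma hasSum_hankelIntegral_mittagLefflerKernel (hφ : φ ∈ Ioc (π / 2) π) (hα : 0 ≤ α)
    (hx : 0 ≤ x) (ha : x * rexp (-(α * a)) ≤ 1 / 2) :
    HasSum (fun k : ℕ => (-x : ℂ) ^ k * (2 * π * I * (Complex.Gamma (α * k + γ))⁻¹))
      (hankelIntegral φ a (mittagLefflerKernel α γ x)) := by
  have hφ₀ : 0 ≤ φ := Real.pi_div_two_pos.le.trans hφ.1.le
  have hratio (s : ℝ) : ‖x * cexp (-(α * hankelContour φ a s))‖ ≤ 1 / 2 := by
    refine le_trans ?_ ha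
    rw [norm_mul, Complex.norm_of_nonneg hx, Complex.norm_exp, Complex.neg_re,
      Complex.re_ofReal_mul]
    gcongr
    exact le_re_hankelContour
  have hterm (k : ℕ) (s : ℝ) :
      ‖(-x : ℂ) ^ k * hankelIntegrand (1 - (α * k + γ)) (hankelContour φ a s)‖
        ≤ ‖hankelIntegrand (1 - γ) (hankelContour φ a s)‖ * (1 / 2) ^ k := by
    rw [hankelIntegrand_one_sub_mul_add, mul_left_comm, ← mul_pow, norm_mul, norm_pow, neg_mul,
      norm_neg]
    gcongr
    exact hratio s
  simp only [← hankelIntegral_hankelIntegrand_one_sub (a := a) hφ, ← hankelIntegral_const_mul]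
  exact hasSum_hankelIntegral
    (fun k => ((continuous_hankelIntegrand _).const_mul _).measurable) summable_geometric_two
    (integrable_hankelIntegrand_hankelContour hφ₀ (cos_neg_of_mem_Ioc hφ)).norm hterm
    fun s => hasSum_mittagLefflerKernel ((hratio s).trans_lt one_half_lt_one)

theorem hankelIntegral_mittagLefflerKernel (hφ : φ ∈ Ioc (π / 2) π) (hα : 0 < α)
    (hαφ : α * φ < π) (hx : 0 ≤ x) (γ : ℝ) :
    hankelIntegral φ 0 (mittagLefflerKernel α γ x) = 2 * π * I * mittagLeffler α γ (-x) := by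
  have hφ₀ : 0 ≤ φ := Real.pi_div_two_pos.le.trans hφ.1.le
  set a := 2 * x / α
  have ha₀ : 0 ≤ a := by positivity
  have ha : x * rexp (-(α * a)) ≤ 1 / 2 := by
    rw [mul_div_cancel₀ _ hα.ne', Real.exp_neg, ← div_eq_mul_inv, div_le_iff₀ (Real.exp_pos _)]
    linarith [Real.add_one_le_exp (2 * x)]
  have hshift : hankelIntegral φ 0 (mittagLefflerKernel α γ x)
      = hankelIntegral φ a (mittagLefflerKernel α γ x) :=
    hankelIntegral_shift hφ₀
      (fun w hw => (differentiableAt_mittagLefflerKernel hα.le hαφ hx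
        (abs_le.2 hw.2)).differentiableWithinAt)
      (integrable_mittagLefflerKernel hφ hα.le hαφ hx le_rfl)
      (integrable_mittagLefflerKernel hφ hα.le hαφ hx ha₀)
  rw [hshift, ← (hasSum_hankelIntegral_mittagLefflerKernel hφ hα.le hx ha).tsum_eq,
    mittagLeffler, Complex.ofReal_tsum, ← tsum_mul_left]
  refine tsum_congr fun k => ?_
  rw [Complex.ofReal_div, ← Complex.Gamma_ofReal]
  push_cast
  ring

end Representation

section Decay

lemma exists_mem_Ioc_mul_lt_pi {α : ℝ} (hα : α < 2) : ∃ φ ∈ Ioc (π / 2) π, α * φ < π := by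
  have hlt : α * (π / 2) < π := by nlinarith [Real.pi_pos]
  have hnear : ∀ᶠ φ in 𝓝[>] (π / 2), α * φ < π :=
    (continuous_const_mul α).continuousWithinAt.eventually_lt_const hlt
  obtain ⟨φ, hαφ, hφ⟩ := (hnear.and (Ioc_mem_nhdsGT (half_lt_self Real.pi_pos))).exists
  exact ⟨φ, hφ, hαφ⟩

theorem exists_abs_mittagLeffler_neg_le {α : ℝ} (hα₀ : 0 < α) (hα₂ : α < 2) (γ : ℝ) :
    ∃ C > 0, ∀ x : ℝ, 0 ≤ x → |mittagLeffler α γ (-x)| ≤ C / (1 + x) := by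
  obtain ⟨φ, hφ, hαφ⟩ := exists_mem_Ioc_mul_lt_pi hα₂
  have hφ₀ : 0 ≤ φ := Real.pi_div_two_pos.le.trans hφ.1.le
  have hcos := cos_mul_div_two_pos hα₀.le hφ₀ hαφ
  set J := ∫ s, ‖hankelIntegrand (1 - γ + α) (hankelContour φ 0 s)‖
  have : 0 ≤ J := integral_nonneg fun s => norm_nonneg _
  refine ⟨J / (2 * π * Real.cos (α * φ / 2)) + 1, by positivity, fun x hx => ?_⟩
  have hbound : 2 * π * |mittagLeffler α γ (-x)| ≤ J / ((1 + x) * Real.cos (α * φ / 2)) := calc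
    2 * π * |mittagLeffler α γ (-x)| = ‖hankelIntegral φ 0 (mittagLefflerKernel α γ x)‖ := by
      rw [hankelIntegral_mittagLefflerKernel hφ hα₀ hαφ hx]
      simp [abs_of_pos Real.pi_pos]
    _ ≤ J / ((1 + x) * Real.cos (α * φ / 2)) := by
      rw [← integral_div]
      exact norm_hankelIntegral_le ((integrable_hankelIntegrand_hankelContour hφ₀
        (cos_neg_of_mem_Ioc hφ)).norm.div_const _) fun s => norm_mittagLefflerKernel_le hα₀.le hαφ
        hx le_re_hankelContour (abs_im_hankelContour_le hφ₀)
  calc |mittagLeffler α γ (-x)|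
      ≤ J / ((1 + x) * Real.cos (α * φ / 2)) / (2 * π) := by
        rwa [le_div_iff₀' Real.two_pi_pos]
    _ = J / (2 * π * Real.cos (α * φ / 2)) / (1 + x) := by field_simp
    _ ≤ (J / (2 * π * Real.cos (α * φ / 2)) + 1) / (1 + x) := by gcongr; linarith

lemma rpow_le_one_add {x β : ℝ} (hx : 0 ≤ x) (hβ₀ : 0 ≤ β) (hβ₁ : β ≤ 1) : x ^ β ≤ 1 + x :=
  calc x ^ β ≤ (1 + x) ^ β := by gcongr; linarith
    _ ≤ 1 + x := Real.rpow_le_self_of_one_le (by linarith) hβ₁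

end Decay

theorem mittagLeffler_weighted_decay_general (α γ β : ℝ) (hα₀ : 0 < α) (hα₂ : α < 2)
    (hβ₀ : 0 ≤ β) (hβ₁ : β ≤ 1) :
    ∃ C > 0, ∀ lam t : ℝ, 0 < lam → 0 < t →
      lam ^ β * |mittagLeffler α γ (-lam * t ^ α)| ≤ C * t ^ (-(α * β)) := by
  obtain ⟨C, hC, hdecay⟩ := exists_abs_mittagLeffler_neg_le hα₀ hα₂ γ
  refine ⟨C, hC, fun lam t hlam ht => ?_⟩
  set x := lam * t ^ α
  have hx : 0 < x := by positivity
  have hrescale : lam ^ β = x ^ β * t ^ (-(α * β)) := by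
    rw [Real.mul_rpow hlam.le (by positivity), ← Real.rpow_mul ht.le, mul_assoc,
      ← Real.rpow_add ht, add_neg_cancel, Real.rpow_zero, mul_one]
  calc lam ^ β * |mittagLeffler α γ (-lam * t ^ α)|
      = x ^ β * t ^ (-(α * β)) * |mittagLeffler α γ (-x)| := by rw [hrescale, neg_mul]
    _ ≤ (1 + x) * t ^ (-(α * β)) * (C / (1 + x)) := by
        gcongr
        exacts [rpow_le_one_add hx.le hβ₀ hβ₁, hdecay x hx.le]
    _ = C * t ^ (-(α * β)) := by field_simp

/-- Let `α ∈ (1,2)`, `γ > 0` and `β ∈ [0,1]`. Then there exists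
`C > 0`, depending only on `α`, `γ` and `β`, such that for all `λ > 0` and `t > 0`:
`λ^β |E_{α,γ}(−λ t^α)| ≤ C t^{−αβ}`. -/
theorem mittagLeffler_weighted_decay (α γ β : ℝ) (hα1 : 1 < α) (hα2 : α < 2)
    (hγ : 0 < γ) (hβ0 : 0 ≤ β) (hβ1 : β ≤ 1) :
    ∃ C > 0, ∀ lam t : ℝ, 0 < lam → 0 < t →
      lam ^ β * |mittagLeffler α γ (-lam * t ^ α)| ≤ C * t ^ (-(α * β)) :=
  mittagLeffler_weighted_decay_general α γ β (one_pos.trans hα1) hα2 hβ0 hβ1
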